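/- Let H ∈ (0, 1/2). There exists a positive constant C, depending only on H, such that for every T ≥ 1, ∫∫∫∫_{0<s<t<u<v<T} min(1, s^(2H−2)) · min(1, t^(2H−2)) · min(1, u^(2H−2)) · min(1, (v−s)^(H−1)) ds dt du dv ≤ C · T^H. -/

import Mathlib

open MeasureTheory Real Set

lemma integrableOn_min_one_rpow {a : ℝ} (ha : a < -1) :
    IntegrableOn (fun x : ℝ => min 1 (x ^ a)) (Ioi 0) := by
  have hm : Measurable fun x : ℝ => min 1 (x ^ a) := by fun_prop
  rw [← Ioc_union_Ioi_eq_Ioi (zero_le_one' ℝ)]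
  refine IntegrableOn.union ?_ ?_
  · refine Measure.integrableOn_of_bounded (M := 1) (by simp) hm.aestronglyMeasurable ?_
    refine (ae_restrict_iff' measurableSet_Ioc).2 (.of_forall fun x hx => ?_)
    have h0 : 0 ≤ x ^ a := rpow_nonneg hx.1.le _
    rw [norm_of_nonneg (le_min zero_le_one h0)]
    exact min_le_left _ _
  · refine (integrableOn_Ioi_rpow_of_lt ha one_pos).mono' hm.aestronglyMeasurable ?_
    refine (ae_restrict_iff' measurableSet_Ioi).2 (.of_forall fun x hx => ?_)
    have h0 : 0 ≤ x ^ a := rpow_nonneg (zero_le_one.trans (le_of_lt hx)) _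
    rw [norm_of_nonneg (le_min zero_le_one h0)]
    exact min_le_right _ _

lemma lintegral_Ioc_rpow {a T : ℝ} (ha : 0 < a) (hT : 0 ≤ T) :
    ∫⁻ x in Ioc 0 T, ENNReal.ofReal (x ^ (a - 1)) = ENNReal.ofReal (T ^ a / a) := by
  have hi : IntervalIntegrable (fun x : ℝ => x ^ (a - 1)) volume 0 T :=
    intervalIntegral.intervalIntegrable_rpow' (by linarith)
  rw [← ofReal_integral_eq_lintegral_ofReal ((intervalIntegrable_iff_integrableOn_Ioc_of_le hT).1 hi)
    ((ae_restrict_iff' measurableSet_Ioc).2 (.of_forall fun x hx => rpow_nonneg hx.1.le _)),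
    ← intervalIntegral.integral_of_le hT, integral_rpow (Or.inl (by linarith))]
  simp [zero_rpow ha.ne']

/-- A product of three functions and a translated kernel integrates to the product of integrals. -/
lemma lintegral_mul_mul_mul_translate {F G : ℝ → ENNReal} (hF : Measurable F) (hG : Measurable G) :
    ∫⁻ p : ℝ × ℝ × ℝ × ℝ, F p.1 * (F p.2.1 * (F p.2.2.1 * G (p.2.2.2 - p.1)))
      = (∫⁻ x, F x) ^ 3 * ∫⁻ x, G x := by
  have inner (s : ℝ) : ∫⁻ q : ℝ × ℝ × ℝ, F s * (F q.1 * (F q.2.1 * G (q.2.2 - s)))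
      = F s * ((∫⁻ x, F x) * ((∫⁻ x, F x) * ∫⁻ x, G x)) := by
    rw [lintegral_const_mul _ (by fun_prop), Measure.volume_eq_prod,
      lintegral_prod_mul (g := fun r : ℝ × ℝ => F r.1 * G (r.2 - s)) (by fun_prop) (by fun_prop),
      Measure.volume_eq_prod,
      lintegral_prod_mul (g := fun v : ℝ => G (v - s)) (by fun_prop) (by fun_prop),
      lintegral_sub_right_eq_self G s]
  rw [Measure.volume_eq_prod, lintegral_prod _ (by fun_prop)]
  simp only [inner]
  rw [lintegral_mul_const _ hF]
  ring

/-- For `H ∈ (0,1/2)` there is `C > 0` (depending only on `H`) such that for all `T ≥ 1`,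
`∫∫∫∫_{0<s<t<u<v<T} min(1,s^{2H-2}) min(1,t^{2H-2}) min(1,u^{2H-2}) min(1,(v-s)^{H-1})
  ds dt du dv ≤ C ⬝ T^H`. -/
theorem fourth_cumulant_simplex_bound (H : ℝ) (hH : H ∈ Set.Ioo (0 : ℝ) (1/2)) :
    ∃ C : ℝ, 0 < C ∧ ∀ T : ℝ, 1 ≤ T →
      (∫ p in {p : ℝ × ℝ × ℝ × ℝ |
          0 < p.1 ∧ p.1 < p.2.1 ∧ p.2.1 < p.2.2.1 ∧ p.2.2.1 < p.2.2.2 ∧ p.2.2.2 < T},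
        min 1 (p.1 ^ (2 * H - 2)) * min 1 (p.2.1 ^ (2 * H - 2))
          * min 1 (p.2.2.1 ^ (2 * H - 2))
          * min 1 ((p.2.2.2 - p.1) ^ (H - 1))) ≤ C * T ^ H := by
  obtain ⟨hH0, hH1⟩ := hH
  set f : ℝ → ℝ := fun x => min 1 (x ^ (2 * H - 2))
  have hf0 {x : ℝ} (hx : 0 < x) : 0 ≤ f x := le_min zero_le_one (rpow_nonneg hx.le _)
  set A : ℝ := ∫ x in Ioi 0, f x
  have hA : 0 ≤ A := setIntegral_nonneg measurableSet_Ioi fun x hx => hf0 hx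
  refine ⟨A ^ 3 / H + 1, by positivity, fun T hT => ?_⟩
  have hT0 : 0 < T := by linarith
  set F : ℝ → ENNReal := (Ioi 0).indicator fun x => ENNReal.ofReal (f x) with hF
  set G : ℝ → ENNReal := (Ioc 0 T).indicator fun x => ENNReal.ofReal (x ^ (H - 1)) with hG
  have hFm : Measurable F := Measurable.indicator (by fun_prop) measurableSet_Ioi
  have hGm : Measurable G := Measurable.indicator (by fun_prop) measurableSet_Ioc
  have hFi : ∫⁻ x, F x = ENNReal.ofReal A := by
    rw [hF, lintegral_indicator measurableSet_Ioi,
      ← ofReal_integral_eq_lintegral_ofReal (integrableOn_min_one_rpow (by linarith))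
        ((ae_restrict_iff' measurableSet_Ioi).2 (.of_forall fun x hx => hf0 hx))]
  have hGi : ∫⁻ x, G x = ENNReal.ofReal (T ^ H / H) := by
    rw [hG, lintegral_indicator measurableSet_Ioc, lintegral_Ioc_rpow hH0 hT0.le]
  have hS : MeasurableSet {p : ℝ × ℝ × ℝ × ℝ |
      0 < p.1 ∧ p.1 < p.2.1 ∧ p.2.1 < p.2.2.1 ∧ p.2.2.1 < p.2.2.2 ∧ p.2.2.2 < T} := by
    measurability
  refine (le_abs_self _).trans ?_
  rw [← Real.norm_eq_abs, ← ENNReal.ofReal_le_ofReal_iff (by positivity), ofReal_norm]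
  refine (enorm_integral_le_lintegral_enorm _).trans ?_
  calc
    _ ≤ ∫⁻ p : ℝ × ℝ × ℝ × ℝ, F p.1 * (F p.2.1 * (F p.2.2.1 * G (p.2.2.2 - p.1))) := by
      refine (setLIntegral_mono' hS fun p hp => ?_).trans (setLIntegral_le_lintegral _ _)
      obtain ⟨s, t, u, v⟩ := p
      obtain ⟨h1, h2, h3, h4, h5⟩ := hp
      dsimp only at h1 h2 h3 h4 h5 ⊢
      have ht : 0 < t := h1.trans h2
      have hu : 0 < u := ht.trans h3
      have hvs : 0 < v - s := by linarith
      have hFe {x : ℝ} (hx : 0 < x) : F x = ‖f x‖ₑ := by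
        rw [hF, indicator_of_mem (mem_Ioi.2 hx), Real.enorm_of_nonneg (hf0 hx)]
      have hGe : ‖min 1 ((v - s) ^ (H - 1))‖ₑ ≤ G (v - s) := by
        rw [hG, indicator_of_mem (mem_Ioc.2 ⟨hvs, by linarith⟩),
          Real.enorm_of_nonneg (le_min zero_le_one (rpow_nonneg hvs.le _))]
        exact ENNReal.ofReal_le_ofReal (min_le_right _ _)
      rw [hFe h1, hFe ht, hFe hu, enorm_mul, enorm_mul, enorm_mul, mul_assoc, mul_assoc]
      gcongr
    _ = ENNReal.ofReal (A ^ 3 * (T ^ H / H)) := by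
      rw [lintegral_mul_mul_mul_translate hFm hGm, hFi, hGi, ENNReal.ofReal_mul (by positivity),
        ENNReal.ofReal_pow hA]
    _ ≤ _ := by
      refine ENNReal.ofReal_le_ofReal ?_
      have : 0 ≤ T ^ H := by positivity
      calc A ^ 3 * (T ^ H / H) = A ^ 3 / H * T ^ H := by ring
        _ ≤ _ := by gcongr; linarith
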